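/- Let A and C be linear subspaces of an n-dimensional vector space V over F_q, and let d ≥ 0 be an integer. The number of d-dimensional subspaces X with C ⊆ X ⊆ V and A ∩ X = A ∩ C equals q^{(dim(A)−dim(A∩C))·(d−dim(C))} · binom(n − dim(A+C), d − dim(C))_q. -/

import Mathlib

/-!
Dividing by `C` reduces the claim to `C = ⊥`: by the modular law `A ⊓ X = A ⊓ C` says that `X / C`
meets the image `B` of `A` in `W = V / C` trivially, and `dim B = dim A - dim (A ⊓ C)`.

To count the `k`-dimensional `X ≤ W` with `X ⊓ B = ⊥`, count in two ways the `k`-tuples in `W` that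
are linearly independent modulo `B`. Such a tuple is an independent `k`-tuple of `W / B` together
with one of `q ^ dim B` lifts for each entry (`tupleEquivProd`). It is also an ordered basis of its
span, which is one of the subspaces `X` being counted, and each of those has the same number of
ordered bases (`tupleEquivSigma`). The quotient of the two counts, both given by
`card_linearIndependent`, is the asserted power of `q` times a Gaussian binomial coefficient.
-/

/-- The Gaussian binomial coefficient with integer indices, equal to `0` when the
lower index is negative or exceeds the upper index. -/
def gbZ (q : ℚ) (n k : ℤ) : ℚ :=
  if 0 ≤ k ∧ k ≤ n then
    ∏ i ∈ Finset.range k.toNat, (q ^ (n - (i : ℤ)) - 1) / (q ^ (k - (i : ℤ)) - 1)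
  else 0

open Module in
/-- Rank-nullity for the quotient map restricted to `X`. -/
theorem finrank_map_mkQ_add {F V : Type*} [Field F] [AddCommGroup V] [Module F V]
    [FiniteDimensional F V] (C X : Submodule F V) :
    finrank F (X.map C.mkQ) + finrank F ↥(X ⊓ C) = finrank F X := by
  have h := LinearMap.finrank_range_add_finrank_ker (C.mkQ.domRestrict X)
  have hk : LinearMap.ker (C.mkQ.domRestrict X) = C.comap X.subtype := by
    ext x; simp [LinearMap.domRestrict_apply]
  rw [LinearMap.range_domRestrict, hk] at h
  rw [← h, ← Submodule.map_comap_subtype, Submodule.finrank_map_subtype_eq]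

section Tuples

variable {F W : Type*} [Field F] [AddCommGroup W] [Module F W]

/-- A tuple independent modulo `B` is an independent tuple of `W ⧸ B` together with, for each
entry, the difference in `B` between that entry and a fixed set-theoretic lift of its class. -/
noncomputable def tupleEquivProd (B : Submodule F W) (k : ℕ) :
    {v : Fin k → W // LinearIndependent F (B.mkQ ∘ v)} ≃
      {u : Fin k → W ⧸ B // LinearIndependent F u} × (Fin k → B) where
  toFun v := (⟨B.mkQ ∘ v.1, v.2⟩, fun i => ⟨v.1 i - Quotient.out (B.mkQ (v.1 i)), by
    rw [← Submodule.Quotient.eq]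
    exact (Quotient.out_eq (B.mkQ (v.1 i))).symm⟩)
  invFun p := ⟨fun i => Quotient.out (p.1.1 i) + p.2 i, by
    have : B.mkQ ∘ (fun i => Quotient.out (p.1.1 i) + (p.2 i : W)) = p.1.1 := by
      funext i
      have h : B.mkQ (Quotient.out (p.1.1 i)) = p.1.1 i := Quotient.out_eq (p.1.1 i)
      have h2 : B.mkQ (p.2 i : W) = 0 := by simp
      simp only [Function.comp_apply, map_add, h, h2, add_zero]
    rw [this]; exact p.1.2⟩
  left_inv v := by
    ext i
    exact add_sub_cancel _ _
  right_inv p := by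
    have h (i) : B.mkQ (Quotient.out (p.1.1 i) + (p.2 i : W)) = p.1.1 i := by
      have h : B.mkQ (Quotient.out (p.1.1 i)) = p.1.1 i := Quotient.out_eq (p.1.1 i)
      have h2 : B.mkQ (p.2 i : W) = 0 := by simp
      rw [map_add, h, h2, add_zero]
    refine Prod.ext (Subtype.ext (funext h)) (funext fun i => Subtype.ext ?_)
    dsimp only
    rw [h]
    exact add_sub_cancel_left _ _

/-- Extensionality for a subspace together with a tuple in it, stated in the ambient space to avoid
heterogeneous equality. -/
theorem sigma_tuple_ext {P : Submodule F W → Prop} {k : ℕ}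
    {p r : Σ X : {X : Submodule F W // P X}, {s : Fin k → X.1 // LinearIndependent F s}}
    (h : p.1.1 = r.1.1) (h2 : ∀ i, (p.2.1 i : W) = r.2.1 i) : p = r := by
  obtain ⟨⟨X, hX⟩, s⟩ := p
  obtain ⟨⟨Y, hY⟩, t⟩ := r
  obtain rfl : X = Y := h
  congr 1
  exact Subtype.ext (funext fun i => Subtype.ext (h2 i))

open Module in
/-- A `k`-tuple independent modulo `B` is an ordered basis of its span, and the spans occurring
are exactly the `k`-dimensional subspaces meeting `B` trivially. -/
noncomputable def tupleEquivSigma [FiniteDimensional F W] (B : Submodule F W) (k : ℕ) :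
    {v : Fin k → W // LinearIndependent F (B.mkQ ∘ v)} ≃
      Σ X : {X : Submodule F W // finrank F X = k ∧ Disjoint B X},
        {s : Fin k → X.1 // LinearIndependent F s} where
  toFun v := ⟨⟨Submodule.span F (Set.range v.1), by
      rw [finrank_span_eq_card (LinearIndependent.of_comp _ v.2), Fintype.card_fin], by
      have := Submodule.range_ker_disjoint v.2
      rw [Submodule.ker_mkQ] at this
      exact this.symm⟩,
    ⟨fun i => ⟨v.1 i, Submodule.subset_span ⟨i, rfl⟩⟩,
      LinearIndependent.of_comp (Submodule.subtype _) (LinearIndependent.of_comp _ v.2)⟩⟩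
  invFun p := ⟨fun i => p.2.1 i, by
    have h1 : LinearIndependent F (fun i => (p.2.1 i : W)) :=
      p.2.2.map' (Submodule.subtype _) (Submodule.ker_subtype _)
    refine h1.map ?_
    rw [Submodule.ker_mkQ]
    refine (p.1.2.2.mono_right (Submodule.span_le.2 ?_)).symm
    rintro _ ⟨i, rfl⟩
    exact (p.2.1 i).2⟩
  left_inv v := rfl
  right_inv := by
    rintro ⟨⟨X, hX, hB⟩, ⟨s, hs⟩⟩
    have hspan : Submodule.span F (Set.range fun i => (s i : W)) = X := by
      refine Submodule.eq_of_le_of_finrank_eq (Submodule.span_le.2 ?_) ?_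
      · rintro _ ⟨i, rfl⟩
        exact (s i).2
      · have h1 : LinearIndependent F (fun i => (s i : W)) :=
          hs.map' (Submodule.subtype _) (Submodule.ker_subtype _)
        rw [finrank_span_eq_card h1, Fintype.card_fin, hX]
    exact sigma_tuple_ext hspan fun i => rfl

open Module in
/-- The double count of the tuples independent modulo `B`. -/
theorem card_disjoint_mul [Fintype F] [FiniteDimensional F W] (B : Submodule F W) (k : ℕ)
    (hk : k ≤ finrank F (W ⧸ B)) :
    Nat.card {X : Submodule F W // finrank F X = k ∧ Disjoint B X} *
        ∏ i : Fin k, (Fintype.card F ^ k - Fintype.card F ^ i.val) =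
      (∏ i : Fin k, (Fintype.card F ^ finrank F (W ⧸ B) - Fintype.card F ^ i.val)) *
        (Fintype.card F ^ finrank F B) ^ k := by
  have : Finite W := Module.finite_of_finite F
  have : Finite (W ⧸ B) := Module.finite_of_finite F
  have hB : Nat.card B = Fintype.card F ^ finrank F B := by
    rw [Module.natCard_eq_pow_finrank (K := F), Nat.card_eq_fintype_card]
  have h := Nat.card_congr ((tupleEquivSigma B k).symm.trans (tupleEquivProd B k))
  have : Fintype {X : Submodule F W // finrank F X = k ∧ Disjoint B X} := Fintype.ofFinite _
  rw [Nat.card_prod, card_linearIndependent hk, Nat.card_fun, hB, Nat.card_sigma,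
    Nat.card_eq_fintype_card (α := Fin k), Fintype.card_fin] at h
  rw [← h, Nat.card_eq_fintype_card]
  have hX (X : {X : Submodule F W // finrank F X = k ∧ Disjoint B X}) :
      Nat.card {s : Fin k → X.1 // LinearIndependent F s} =
        ∏ i : Fin k, (Fintype.card F ^ k - Fintype.card F ^ i.val) := by
    rw [card_linearIndependent X.2.1.ge, X.2.1]
  simp [hX]

open Module in
/-- The case `C = ⊥` of the count. -/
theorem card_disjoint [Fintype F] [FiniteDimensional F W] (B : Submodule F W) (k : ℕ) :
    (Nat.card {X : Submodule F W // finrank F X = k ∧ Disjoint B X} : ℚ) =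
      (Fintype.card F : ℚ) ^ (finrank F B * k) *
        gbZ (Fintype.card F) (finrank F (W ⧸ B)) k := by
  have hW := B.finrank_quotient_add_finrank
  by_cases hk : k ≤ finrank F (W ⧸ B)
  · have h := congrArg (Nat.cast (R := ℚ)) (card_disjoint_mul B k hk)
    have hq : 1 < Fintype.card F := Fintype.one_lt_card
    generalize Fintype.card F = q at *
    generalize finrank F (W ⧸ B) = N at *
    have hq' : (1 : ℚ) < q := by exact_mod_cast hq
    have cast_prod (M : ℕ) (hM : k ≤ M) : ((∏ i : Fin k, (q ^ M - q ^ i.val) : ℕ) : ℚ) =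
        ∏ i ∈ Finset.range k, ((q : ℚ) ^ M - (q : ℚ) ^ i) := by
      rw [Nat.cast_prod, ← Fin.prod_univ_eq_prod_range (fun i => (q : ℚ) ^ M - (q : ℚ) ^ i)]
      refine Finset.prod_congr rfl fun i _ => ?_
      rw [Nat.cast_sub (Nat.pow_le_pow_right hq.le (i.2.le.trans hM))]
      push_cast; rfl
    rw [Nat.cast_mul, Nat.cast_mul, cast_prod k le_rfl, cast_prod N hk] at h
    have hne : ∏ i ∈ Finset.range k, ((q : ℚ) ^ k - (q : ℚ) ^ i) ≠ 0 := by
      refine Finset.prod_ne_zero_iff.2 fun i hi => ?_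
      exact (sub_pos.2 (pow_lt_pow_right₀ hq' (Finset.mem_range.1 hi))).ne'
    have hgb : gbZ q N k = (∏ i ∈ Finset.range k, ((q : ℚ) ^ N - (q : ℚ) ^ i)) /
        ∏ i ∈ Finset.range k, ((q : ℚ) ^ k - (q : ℚ) ^ i) := by
      rw [gbZ, if_pos ⟨by positivity, by exact_mod_cast hk⟩, Int.toNat_natCast,
        ← Finset.prod_div_distrib]
      refine Finset.prod_congr rfl fun i _ => ?_
      have hq0 : (q : ℚ) ≠ 0 := by positivity
      have hi : (q : ℚ) ^ i ≠ 0 := pow_ne_zero _ hq0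
      rw [zpow_sub₀ hq0, zpow_sub₀ hq0, zpow_natCast, zpow_natCast, zpow_natCast,
        div_sub_one hi, div_sub_one hi, div_div_div_cancel_right₀ hi]
    rw [hgb, mul_div_assoc', eq_div_iff hne, h, pow_mul]
    push_cast; ring
  · have : IsEmpty {X : Submodule F W // finrank F X = k ∧ Disjoint B X} := by
      refine ⟨fun ⟨X, hX, hd⟩ => hk ?_⟩
      have := Submodule.finrank_add_finrank_le_of_disjoint hd
      omega
    rw [gbZ, if_neg (fun h => hk (by exact_mod_cast h.2))]
    simp

open Module in
/-- The correspondence theorem for `W ⧸ C`, restricted to the subspaces being counted. -/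
noncomputable def subspaceEquivQuotient [FiniteDimensional F W] (A C : Submodule F W) (k : ℕ) :
    {X : Submodule F W // finrank F X = finrank F C + k ∧ C ≤ X ∧ A ⊓ X = A ⊓ C} ≃
      {Y : Submodule F (W ⧸ C) // finrank F Y = k ∧ Disjoint (A.map C.mkQ) Y} where
  toFun X := ⟨X.1.map C.mkQ, by
    obtain ⟨X, hd, hC, hA⟩ := X
    constructor
    · have := finrank_map_mkQ_add C X
      rw [inf_eq_right.2 hC] at this
      simp only
      omega
    · rw [Submodule.disjoint_def]
      rintro _ ⟨a, ha, rfl⟩ hx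
      have haX : a ∈ X := by
        have : a ∈ (X.map C.mkQ).comap C.mkQ := hx
        rwa [Submodule.comap_map_mkQ, sup_eq_right.2 hC] at this
      have : a ∈ A ⊓ C := hA ▸ ⟨ha, haX⟩
      simpa using this.2⟩
  invFun Y := ⟨Y.1.comap C.mkQ, by
    obtain ⟨Y, hd, hA⟩ := Y
    have hC := Submodule.le_comap_mkQ C Y
    refine ⟨?_, hC, le_antisymm (fun a ha => ⟨ha.1, ?_⟩) (inf_le_inf_left _ hC)⟩
    · have := finrank_map_mkQ_add C (Y.comap C.mkQ)
      rw [inf_eq_right.2 hC, Submodule.map_comap_eq_of_surjective C.mkQ_surjective] at this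
      simp only
      omega
    · have := Submodule.disjoint_def.1 hA _ ⟨a, ha.1, rfl⟩ ha.2
      simpa using this⟩
  left_inv X := Subtype.ext <| by
    simp only [Submodule.comap_map_mkQ]
    exact sup_eq_right.2 X.2.2.1
  right_inv Y := Subtype.ext <| Submodule.map_comap_eq_of_surjective C.mkQ_surjective _

end Tuples

theorem stmt12 (F : Type*) [Field F] [Fintype F] (V : Type*) [AddCommGroup V]
    [Module F V] [FiniteDimensional F V] (n : ℕ) (hV : Module.finrank F V = n)
    (A C : Submodule F V) (d : ℕ) :
    (Nat.card {X : Submodule F V //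
          Module.finrank F ↥X = d ∧ C ≤ X ∧ A ⊓ X = A ⊓ C} : ℚ) =
      (Fintype.card F : ℚ) ^
          (((Module.finrank F ↥A : ℤ) - (Module.finrank F ↥(A ⊓ C) : ℤ)) *
            ((d : ℤ) - (Module.finrank F ↥C : ℤ))) *
        gbZ (Fintype.card F) ((n : ℤ) - (Module.finrank F ↥(A ⊔ C) : ℤ))
          ((d : ℤ) - (Module.finrank F ↥C : ℤ)) := by
  by_cases hd : Module.finrank F C ≤ d
  · obtain ⟨k, rfl⟩ := Nat.exists_eq_add_of_le hd
    rw [Nat.card_congr (subspaceEquivQuotient A C k), card_disjoint]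
    have h1 := finrank_map_mkQ_add C A
    have h2 := Submodule.finrank_sup_add_finrank_inf_eq A C
    have h3 := C.finrank_quotient_add_finrank
    have h4 := (A.map C.mkQ).finrank_quotient_add_finrank
    have e1 : ((Module.finrank F C + k : ℕ) : ℤ) - (Module.finrank F C : ℤ) = k := by
      push_cast; ring
    have e2 : (Module.finrank F A : ℤ) - (Module.finrank F ↥(A ⊓ C) : ℤ) =
        (Module.finrank F (A.map C.mkQ) : ℤ) := by omega
    have e3 : (n : ℤ) - (Module.finrank F ↥(A ⊔ C) : ℤ) =
        (Module.finrank F ((V ⧸ C) ⧸ A.map C.mkQ) : ℤ) := by omega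
    rw [e1, e2, e3, ← Nat.cast_mul, zpow_natCast]
  · have : IsEmpty {X : Submodule F V //
        Module.finrank F ↥X = d ∧ C ≤ X ∧ A ⊓ X = A ⊓ C} :=
      ⟨fun X => hd (X.2.1 ▸ Submodule.finrank_mono X.2.2.1)⟩
    rw [gbZ, if_neg (by omega)]
    simp
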